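/- Let n ≥ 1, s ∈ (0,1), and let Ω ⊂ ℝⁿ be a bounded C² domain that is strictly star-shaped with respect to the origin. Let u ∈ C²(Ω) ∩ C¹(cl Ω) ∩ C^{0,1}(ℝⁿ) with u = 0 in Ωᶜ satisfy condition (★), and let 𝔤 = (−Δ)^{s/2}u. Define Φ(λ) = ∫_{ℝⁿ} 𝔤(λx) 𝔤(x/λ) dx. Then the one-sided derivative of Φ at λ = 1 vanishes: lim_{λ→1⁺} (Φ(λ) − Φ(1))/(λ − 1) = 0. -/

import Mathlib

open MeasureTheory Real Set Metric Bornology Filter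
open scoped RealInnerProductSpace ENNReal NNReal Pointwise

noncomputable section

abbrev En (n : ℕ) : Type := EuclideanSpace ℝ (Fin n)

/-- The normalizing constant `c_{n,s}`. -/
def cK (n : ℕ) (s : ℝ) : ℝ :=
  s * (2 : ℝ) ^ (2 * s) * Real.Gamma (((n : ℝ) + 2 * s) / 2) /
    (Real.pi ^ ((n : ℝ) / 2) * Real.Gamma (1 - s))

/-- The fractional Laplacian `(-Δ)ˢ u (x)`. -/
def fracLap (n : ℕ) (s : ℝ) (u : En n → ℝ) (x : En n) : ℝ :=
  (cK n s / 2) * ∫ y : En n, (2 * u x - u (x + y) - u (x - y)) / ‖y‖ ^ ((n : ℝ) + 2 * s)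

/-- `(-Δ)^{s/2} u (x)`, defined via the non-symmetrized integral. -/
def fracHalf (n : ℕ) (s : ℝ) (u : En n → ℝ) (x : En n) : ℝ :=
  cK n (s / 2) * ∫ z : En n, (u x - u (x + z)) / ‖z‖ ^ ((n : ℝ) + s)

/-- The squared Gagliardo-type seminorm `[u]_s²`. -/
def seminormSsq (n : ℕ) (s : ℝ) (u : En n → ℝ) : ℝ :=
  (cK n s / 2) * ∫ p : En n × En n, (u p.1 - u p.2) ^ 2 / ‖p.1 - p.2‖ ^ ((n : ℝ) + 2 * s)

/-- The squared seminorm `[u]₁² = ∫_Ω |∇u|²`. -/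
def seminorm1sq (n : ℕ) (Ω : Set (En n)) (u : En n → ℝ) : ℝ :=
  ∫ x in Ω, ‖gradient u x‖ ^ 2

/-- The Laplacian as the trace of the Hessian. -/
def lap (n : ℕ) (u : En n → ℝ) (x : En n) : ℝ :=
  ∑ i : Fin n, fderiv ℝ (fun y => fderiv ℝ u y (EuclideanSpace.single i 1)) x
    (EuclideanSpace.single i 1)

/-- The Hessian `D²u(x)` as a continuous bilinear-type map; `‖hess n u x‖` is its operator
norm. -/
def hess (n : ℕ) (u : En n → ℝ) (x : En n) : En n →L[ℝ] En n →L[ℝ] ℝ :=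
  fderiv ℝ (fderiv ℝ u) x

/-- A bounded C² domain `Ω ⊆ ℝⁿ`: a bounded open connected set whose boundary is a C²
hypersurface, described by a global C² defining function with nonvanishing gradient
on the boundary. -/
structure C2Domain (n : ℕ) where
  carrier : Set (En n)
  phi : En n → ℝ
  phi_smooth : ContDiff ℝ 2 phi
  carrier_eq : carrier = {x | phi x < 0}
  grad_ne : ∀ x ∈ frontier carrier, gradient phi x ≠ 0
  bounded : IsBounded carrier
  connected : IsConnected carrier

/-- The outward unit normal `ν` on `∂Ω`. -/
def C2Domain.nu {n : ℕ} (D : C2Domain n) (x : En n) : En n :=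
  ‖gradient D.phi x‖⁻¹ • gradient D.phi x

/-- The normal derivative `∂u/∂ν` at a boundary point (the derivative from inside). -/
def normalDeriv {n : ℕ} (D : C2Domain n) (u : En n → ℝ) (x : En n) : ℝ :=
  fderivWithin ℝ u (closure D.carrier) x (D.nu x)

/-- `Ω` is strictly star-shaped with respect to `z₀`. -/
def C2Domain.StrictlyStarShapedAt {n : ℕ} (D : C2Domain n) (z₀ : En n) : Prop :=
  z₀ ∈ D.carrier ∧ ∀ x ∈ frontier D.carrier, 0 < ⟪x - z₀, D.nu x⟫

/-- `Ω` is strictly star-shaped. -/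
def C2Domain.StrictlyStarShaped {n : ℕ} (D : C2Domain n) : Prop :=
  ∃ z₀, D.StrictlyStarShapedAt z₀

/-- The Pohozaev boundary term `∫_{∂Ω} (∂u/∂ν)² (x·ν(x)) dS`, with `dS` the
`(n-1)`-dimensional Hausdorff measure on `∂Ω`. -/
def pohozaevBoundary {n : ℕ} (D : C2Domain n) (u : En n → ℝ) : ℝ :=
  ∫ x in frontier D.carrier, (normalDeriv D u x) ^ 2 * ⟪x, D.nu x⟫ ∂ μH[(n : ℝ) - 1]

/-- Condition (★). -/
def StarCond (n : ℕ) (s : ℝ) (Ω : Set (En n)) (u : En n → ℝ) : Prop :=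
  ∃ C > 0, ∃ γ ∈ Set.Ioo (0:ℝ) 1, ∀ x ∈ Ω,
    ‖hess n u x‖ ≤ C * infDist x (frontier Ω) ^ (γ - 1) ∧
    |u x| ≤ C * infDist x (frontier Ω) ∧
    |fracLap n s u x| ≤ C * (1 + (if s < 1/2 then 1 else 0)
      + (if s = 1/2 then |Real.log (infDist x (frontier Ω))| else 0)
      + (if 1/2 < s then infDist x (frontier Ω) ^ (1 - 2*s) else 0))



lemma dom_open {n : ℕ} (D : C2Domain n) : IsOpen D.carrier := by
  rw [D.carrier_eq]
  exact isOpen_lt D.phi_smooth.continuous continuous_const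

lemma inner_gradient_eq {n : ℕ} (f : En n → ℝ) (x v : En n) :
    ⟪v, gradient f x⟫ = fderiv ℝ f x v := by
  rw [real_inner_comm, ← toDual_gradient]; rfl

lemma seg_mem {n : ℕ} (D : C2Domain n) (b : En n) (hb : b ∈ D.carrier)
    (hstar : ∀ x ∈ frontier D.carrier, 0 < fderiv ℝ D.phi x (x - b))
    (x : En n) (hx : x ∈ D.carrier) (τ : ℝ) (hτ : τ ∈ Icc (0:ℝ) 1) :
    b + τ • (x - b) ∈ D.carrier := by
  by_contra hcon
  have hmem : ∀ y, y ∈ D.carrier ↔ D.phi y < 0 := by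
    intro y; rw [D.carrier_eq]; rfl
  have hcφ := D.phi_smooth.continuous
  have hdφ : Differentiable ℝ D.phi := D.phi_smooth.differentiable (by norm_num)
  set p : ℝ → En n := fun t => b + t • (x - b) with hp
  have hpc : Continuous p := by fun_prop
  set S : Set ℝ := Icc 0 1 ∩ {t | 0 ≤ D.phi (p t)} with hS
  have hSc : IsCompact S :=
    isCompact_Icc.inter_right (isClosed_le continuous_const (hcφ.comp hpc))
  have hSn : S.Nonempty := ⟨τ, hτ, by
    have := (hmem (p τ)).not.1 hcon
    simpa using this⟩
  obtain ⟨σ, hσS, hσmax⟩ := hSc.exists_isGreatest hSn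
  have hσ1 : σ < 1 := by
    rcases lt_or_eq_of_le hσS.1.2 with h | h
    · exact h
    · exfalso
      have h2 := hσS.2
      rw [h] at h2
      have : p 1 = x := by simp [hp]
      simp only [mem_ofPred_eq, this] at h2
      exact absurd ((hmem x).1 hx) (not_lt.2 h2)
  have hσ0 : 0 < σ := by
    rcases lt_or_eq_of_le hσS.1.1 with h | h
    · exact h
    · exfalso
      have h2 := hσS.2
      rw [← h] at h2
      have : p 0 = b := by simp [hp]
      simp only [mem_ofPred_eq, this] at h2
      exact absurd ((hmem b).1 hb) (not_lt.2 h2)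
  have hafter : ∀ t ∈ Ioc σ 1, D.phi (p t) < 0 := by
    intro t ht
    by_contra h
    have := hσmax (show t ∈ S from ⟨⟨hσ0.le.trans ht.1.le, ht.2⟩, by simpa using h⟩)
    exact absurd ht.1 (not_lt.2 this)
  have hev : ∀ᶠ t in nhdsWithin σ (Ioi σ), D.phi (p t) < 0 := by
    filter_upwards [Ioc_mem_nhdsGT hσ1] with t ht using hafter t ht
  have hcl : p σ ∈ closure D.carrier := by
    refine mem_closure_of_tendsto (b := nhdsWithin σ (Ioi σ)) (f := p)
      (hpc.continuousAt.tendsto.mono_left nhdsWithin_le_nhds) ?_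
    filter_upwards [hev] with t ht using (hmem _).2 ht
  have hfr : p σ ∈ frontier D.carrier := by
    rw [(dom_open D).frontier_eq]
    refine ⟨hcl, ?_⟩
    rw [hmem]; exact not_lt.2 hσS.2
  have hpos := hstar _ hfr
  have hps : p σ - b = σ • (x - b) := by simp [hp]
  rw [hps, map_smul, smul_eq_mul] at hpos
  have hpos' : 0 < fderiv ℝ D.phi (p σ) (x - b) := by
    by_contra h
    push Not at h
    nlinarith
  have hder : HasDerivAt (fun t => D.phi (p t)) (fderiv ℝ D.phi (p σ) (x - b)) σ := by
    have h1 : HasDerivAt p (x - b) σ := by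
      have := ((hasDerivAt_id σ).smul_const (x - b)).const_add b
      simpa [hp] using this
    exact (hdφ (p σ)).hasFDerivAt.comp_hasDerivAt σ h1
  have hsl := hder.tendsto_slope
  have hev2 : ∀ᶠ t in nhdsWithin σ (Ioi σ), 0 < slope (fun t => D.phi (p t)) σ t :=
    (hsl.mono_left (nhdsWithin_mono _ (fun t ht => ne_of_gt ht))).eventually (lt_mem_nhds hpos')
  obtain ⟨t, ⟨ht1, ht2⟩, ht3⟩ := ((hev.and hev2).and self_mem_nhdsWithin).exists
  have ht3' : σ < t := ht3
  rw [slope_def_field] at ht2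
  have h4 : 0 ≤ D.phi (p σ) := hσS.2
  have : (D.phi (p t) - D.phi (p σ)) / (t - σ) < 0 :=
    div_neg_of_neg_of_pos (by linarith) (by linarith)
  linarith

/-- The domain is star-shaped with respect to a ball. -/
lemma star_ball {n : ℕ} (D : C2Domain n) (hD : D.StrictlyStarShapedAt 0) :
    ∃ ρ > 0, ∀ b : En n, ‖b‖ ≤ ρ → ∀ x ∈ D.carrier, ∀ τ ∈ Icc (0:ℝ) 1,
      b + τ • (x - b) ∈ D.carrier := by
  obtain ⟨h0, hst⟩ := hD
  have hcpt : IsCompact (frontier D.carrier) :=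
    Metric.isCompact_of_isClosed_isBounded isClosed_frontier
      (D.bounded.closure.subset frontier_subset_closure)
  have hfc : Continuous (fderiv ℝ D.phi) := D.phi_smooth.continuous_fderiv (by norm_num)
  have hpos : ∀ x ∈ frontier D.carrier, 0 < fderiv ℝ D.phi x x := by
    intro x hx
    have h1 := hst x hx
    rw [C2Domain.nu, inner_smul_right, sub_zero, inner_gradient_eq] at h1
    have h2 : 0 < ‖gradient D.phi x‖⁻¹ := inv_pos.2 (norm_pos_iff.2 (D.grad_ne x hx))
    exact pos_of_mul_pos_right h1 h2.le
  obtain ⟨m, hm, hmle⟩ := hcpt.exists_forall_le'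
    (f := fun x => fderiv ℝ D.phi x x) (by fun_prop) hpos
  obtain ⟨M, hM⟩ := hcpt.exists_bound_of_continuousOn (f := fderiv ℝ D.phi) hfc.continuousOn
  obtain ⟨r, hr, hrb⟩ := Metric.isOpen_iff.1 (dom_open D) 0 h0
  have hM1 : 0 < |M| + 1 := by positivity
  refine ⟨min (r / 2) (m / (2 * (|M| + 1))), by positivity, ?_⟩
  intro b hb x hx τ hτ
  have hb1 : ‖b‖ ≤ r / 2 := hb.trans (min_le_left _ _)
  have hb2 : ‖b‖ ≤ m / (2 * (|M| + 1)) := hb.trans (min_le_right _ _)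
  refine seg_mem D b (hrb ?_) ?_ x hx τ hτ
  · rw [mem_ball_zero_iff]; linarith
  · intro y hy
    have h1 := hmle y hy
    have h2 := hM y hy
    have h3 : fderiv ℝ D.phi y b ≤ ‖fderiv ℝ D.phi y‖ * ‖b‖ :=
      (le_abs_self _).trans ((fderiv ℝ D.phi y).le_opNorm b)
    have h4 : ‖fderiv ℝ D.phi y‖ * ‖b‖ ≤ (|M| + 1) * (m / (2 * (|M| + 1))) := by
      gcongr
      exact h2.trans ((le_abs_self M).trans (by linarith))
    have h5 : (|M| + 1) * (m / (2 * (|M| + 1))) = m / 2 := by field_simp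
    rw [map_sub]
    linarith

/-- Consequences: shrinking. -/
lemma shrink_ball {n : ℕ} {Ω : Set (En n)} {ρ : ℝ}
    (h : ∀ b : En n, ‖b‖ ≤ ρ → ∀ x ∈ Ω, ∀ τ ∈ Icc (0:ℝ) 1, b + τ • (x - b) ∈ Ω)
    (x : En n) (hx : x ∈ Ω) (τ : ℝ) (hτ : τ ∈ Ico (0:ℝ) 1) (y : En n)
    (hy : ‖y - τ • x‖ ≤ (1 - τ) * ρ) : y ∈ Ω := by
  have h1 : 0 < 1 - τ := by linarith [hτ.2]
  have := h ((1 - τ)⁻¹ • (y - τ • x)) (by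
    rw [norm_smul, Real.norm_of_nonneg (by positivity)]
    rw [inv_mul_le_iff₀ h1]; exact hy) x hx τ ⟨hτ.1, hτ.2.le⟩
  convert this using 1
  have e : (1 - τ)⁻¹ • (y - τ • x) + τ • (x - (1 - τ)⁻¹ • (y - τ • x))
      = ((1 - τ) * (1 - τ)⁻¹) • (y - τ • x) + τ • x := by module
  rw [e, mul_inv_cancel₀ h1.ne', one_smul]; abel

lemma shrink_closure {n : ℕ} {Ω : Set (En n)} {ρ : ℝ} (hρ : 0 < ρ)
    (h : ∀ b : En n, ‖b‖ ≤ ρ → ∀ x ∈ Ω, ∀ τ ∈ Icc (0:ℝ) 1, b + τ • (x - b) ∈ Ω)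
    (x : En n) (hx : x ∈ closure Ω) (τ : ℝ) (hτ : τ ∈ Ico (0:ℝ) 1) : τ • x ∈ Ω := by
  have h1 : 0 < 1 - τ := by linarith [hτ.2]
  obtain ⟨y, hy, hxy⟩ := Metric.mem_closure_iff.1 hx ((1 - τ) * ρ) (by positivity)
  refine shrink_ball h y hy τ hτ _ ?_
  rw [← smul_sub, norm_smul, Real.norm_of_nonneg hτ.1, ← dist_eq_norm]
  nlinarith [hτ.2, dist_nonneg (x := x) (y := y)]

lemma shrink_infDist {n : ℕ} {Ω : Set (En n)} {ρ : ℝ} (ho : IsOpen Ω)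
    (hne : (frontier Ω).Nonempty)
    (h : ∀ b : En n, ‖b‖ ≤ ρ → ∀ x ∈ Ω, ∀ τ ∈ Icc (0:ℝ) 1, b + τ • (x - b) ∈ Ω)
    (x : En n) (hx : x ∈ Ω) (τ : ℝ) (hτ : τ ∈ Ico (0:ℝ) 1) :
    (1 - τ) * ρ ≤ infDist (τ • x) (frontier Ω) := by
  rw [le_infDist hne]
  intro y hy
  by_contra hc
  push Not at hc
  have : y ∈ Ω := shrink_ball h x hx τ hτ y (by rw [← dist_eq_norm, dist_comm]; exact hc.le)
  rw [ho.frontier_eq] at hy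
  exact hy.2 this

lemma frontier_ne {n : ℕ} (hn : 1 ≤ n) (D : C2Domain n) : (frontier D.carrier).Nonempty := by
  rw [nonempty_frontier_iff]
  refine ⟨D.connected.nonempty, ?_⟩
  intro h
  have hb := D.bounded
  rw [h] at hb
  have : Nonempty (Fin n) := ⟨⟨0, hn⟩⟩
  have : Nontrivial (En n) := inferInstance
  exact NormedSpace.unbounded_univ ℝ (En n) hb


lemma vol_smul {n : ℕ} (a : ℝ) (ha : 0 ≤ a) (S : Set (En n)) :
    volume (a • S) = ENNReal.ofReal (a ^ n) * volume S := by
  rw [Measure.addHaar_smul, finrank_euclideanSpace_fin, abs_of_nonneg (by positivity)]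

lemma vol_shell {n : ℕ} {Ω : Set (En n)} (ho : IsOpen Ω) (hb : IsBounded Ω)
    (a : ℝ) (ha : a ∈ Icc (0:ℝ) 1) (hsub : a • Ω ⊆ Ω) :
    volume (Ω \ a • Ω) ≤ ENNReal.ofReal (n * (1 - a)) * volume Ω := by
  have hfin : volume Ω ≠ ∞ := hb.measure_lt_top.ne
  rcases eq_or_lt_of_le ha.1 with h | h
  · rcases n.eq_zero_or_pos with h0 | h0
    · subst h0
      have : Ω \ a • Ω = ∅ := by
        ext x
        simp only [Set.mem_sdiff, mem_empty_iff_false, iff_false, not_and, not_not]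
        intro hx
        exact ⟨x, hx, Subsingleton.elim _ _⟩
      rw [this]; simp
    · refine (measure_mono sdiff_subset).trans ?_
      rw [← h]
      have : (1:ℝ≥0∞) ≤ ENNReal.ofReal (n * (1 - 0)) := by
        rw [ENNReal.one_le_ofReal]; simp; exact_mod_cast h0
      calc volume Ω = 1 * volume Ω := (one_mul _).symm
        _ ≤ _ := by gcongr
  · have hom : IsOpen (a • Ω) := ho.smul₀ h.ne'
    rw [measure_sdiff hsub hom.measurableSet.nullMeasurableSet
      (ne_top_of_le_ne_top hfin (measure_mono hsub)), vol_smul a ha.1]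
    rw [tsub_le_iff_right, ← add_mul]
    rw [← ENNReal.ofReal_add (mul_nonneg (by positivity) (by linarith [ha.2])) (by positivity)]
    have : (1:ℝ≥0∞) ≤ ENNReal.ofReal (n * (1 - a) + a ^ n) := by
      rw [ENNReal.one_le_ofReal]
      have := one_add_mul_le_pow (a := a - 1) (by linarith) n
      have e : 1 + (a - 1) = a := by ring
      rw [e] at this
      linarith
    calc volume Ω = 1 * volume Ω := (one_mul _).symm
      _ ≤ _ := by gcongr

lemma dist_integrable {n : ℕ} {Ω : Set (En n)} {ρ : ℝ} (hρ : 0 < ρ) (ho : IsOpen Ω)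
    (hb : IsBounded Ω) (hne : (frontier Ω).Nonempty)
    (h : ∀ b : En n, ‖b‖ ≤ ρ → ∀ x ∈ Ω, ∀ τ ∈ Icc (0:ℝ) 1, b + τ • (x - b) ∈ Ω)
    (γ : ℝ) (hγ : γ ∈ Ioo (0:ℝ) 1) :
    ∫⁻ x in Ω, ENNReal.ofReal (infDist x (frontier Ω) ^ (γ - 1)) < ∞ := by
  have hfin : volume Ω ≠ ∞ := hb.measure_lt_top.ne
  set q : ℕ → ℝ := fun k => (1 / 2 : ℝ) ^ k with hq
  have hq0 : ∀ k, 0 < q k := fun k => by positivity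
  have hq1 : ∀ k, q k ≤ 1 := fun k => pow_le_one₀ (by norm_num) (by norm_num)
  set B : ℕ → Set (En n) := fun k => Ω \ (1 - q k) • Ω with hB
  set c : ℕ → ℝ≥0∞ := fun k => ENNReal.ofReal ((ρ * q (k + 1)) ^ (γ - 1)) with hc
  have hmono : ∀ r d : ℝ, 0 < r → r ≤ d →
      ENNReal.ofReal (d ^ (γ - 1)) ≤ ENNReal.ofReal (r ^ (γ - 1)) := by
    intro r d hr hrd
    exact ENNReal.ofReal_le_ofReal (Real.rpow_le_rpow_of_nonpos hr hrd (by linarith [hγ.2]))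
  have hsub : ∀ k, (1 - q k) • Ω ⊆ Ω := by
    rintro k _ ⟨x, hx, rfl⟩
    exact shrink_closure hρ h x (subset_closure hx) _ ⟨by linarith [hq1 k], by linarith [hq0 k]⟩
  have hBm : ∀ k, MeasurableSet (B k) := by
    intro k
    rcases eq_or_ne (1 - q k) 0 with h0 | h0
    · simp only [hB, h0]
      refine ho.measurableSet.diff ?_
      exact (Set.Subsingleton.measurableSet (by
        rintro _ ⟨x, _, rfl⟩ _ ⟨y, _, rfl⟩; simp))
    · exact ho.measurableSet.diff (ho.smul₀ h0).measurableSet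
  have hpt : ∀ x ∈ Ω, ENNReal.ofReal (infDist x (frontier Ω) ^ (γ - 1)) ≤
      ENNReal.ofReal (ρ ^ (γ - 1)) + ∑' k, (B k).indicator (fun _ => c k) x := by
    intro x hx
    have hex : ∃ k, x ∈ (1 - q k) • Ω := by
      have hq2 : Tendsto q atTop (nhds 0) :=
        tendsto_pow_atTop_nhds_zero_of_lt_one (by norm_num) (by norm_num)
      have ht : Tendsto (fun k => (1 - q k)⁻¹ • x) atTop (nhds ((1 - 0 : ℝ)⁻¹ • x)) := by
        refine Tendsto.smul_const ?_ x
        exact (tendsto_const_nhds.sub hq2).inv₀ (by norm_num)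
      simp only [sub_zero, inv_one, one_smul] at ht
      have e1 := ht.eventually (ho.mem_nhds hx)
      have e2 := hq2.eventually (gt_mem_nhds (show (0:ℝ) < 1 by norm_num))
      obtain ⟨k, hk1, hk2⟩ := (e1.and e2).exists
      exact ⟨k, (mem_smul_set_iff_inv_smul_mem₀ (by linarith) _ _).2 hk1⟩
    classical
    have hfind := Nat.find_spec hex
    have hmin := fun m => @Nat.find_min _ _ hex m
    rcases hk : Nat.find hex with _ | k
    · rw [hk] at hfind
      have hx0 : x = (0:ℝ) • x := by
        obtain ⟨y, _, hy⟩ := hfind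
        simp only [hq, pow_zero, sub_self, zero_smul] at hy
        rw [← hy]; simp
      refine le_add_right (hmono ρ _ hρ ?_)
      have := shrink_infDist ho hne h x hx 0 ⟨le_rfl, one_pos⟩
      rw [← hx0] at this
      linarith
    · rw [hk] at hfind
      have hxB : x ∈ B k := ⟨hx, hmin k (by omega)⟩
      refine le_add_left ?_
      refine le_trans ?_ (ENNReal.le_tsum k)
      rw [indicator_of_mem hxB]
      obtain ⟨y, hy, hyx⟩ := hfind
      refine hmono _ _ (mul_pos hρ (hq0 _)) ?_
      have := shrink_infDist ho hne h y hy (1 - q (k+1))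
        ⟨by linarith [hq1 (k+1)], by linarith [hq0 (k+1)]⟩
      simp only at hyx
      rw [hyx] at this
      linarith
  calc ∫⁻ x in Ω, ENNReal.ofReal (infDist x (frontier Ω) ^ (γ - 1))
      ≤ ∫⁻ x in Ω, (ENNReal.ofReal (ρ ^ (γ - 1)) + ∑' k, (B k).indicator (fun _ => c k) x) :=
        setLIntegral_mono' ho.measurableSet hpt
    _ = ENNReal.ofReal (ρ ^ (γ - 1)) * volume Ω
        + ∑' k, ∫⁻ x in Ω, (B k).indicator (fun _ => c k) x := by
        rw [lintegral_add_left measurable_const, lintegral_tsum]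
        · simp
        · intro k
          exact (measurable_const.indicator (hBm k)).aemeasurable
    _ ≤ ENNReal.ofReal (ρ ^ (γ - 1)) * volume Ω
        + ∑' k, ENNReal.ofReal (n * (ρ / 2) ^ (γ - 1) * ((1 / 2 : ℝ) ^ γ) ^ k) * volume Ω := by
        gcongr with k
        rw [lintegral_indicator_const (hBm k)]
        have h1 : volume.restrict Ω (B k) ≤ ENNReal.ofReal (n * q k) * volume Ω := by
          refine (Measure.restrict_apply_le _ _).trans ?_
          have := vol_shell ho hb (1 - q k) ⟨by linarith [hq1 k], by linarith [hq0 k]⟩ (hsub k)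
          simpa using this
        refine (mul_le_mul_right h1 _).trans ?_
        rw [← mul_assoc, ← ENNReal.ofReal_mul (by positivity)]
        refine le_of_eq (congrArg (fun t => ENNReal.ofReal t * volume Ω) ?_)
        have e1 : ρ * q (k + 1) = (ρ / 2) * q k := by simp only [hq, pow_succ]; ring
        rw [e1, Real.mul_rpow (by positivity) (hq0 k).le]
        have e2 : ((1 / 2 : ℝ) ^ γ) ^ k = q k ^ γ := by
          simp only [hq]
          rw [← Real.rpow_natCast, ← Real.rpow_natCast, ← Real.rpow_mul (by norm_num),
            ← Real.rpow_mul (by norm_num), mul_comm]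
        have e3 : q k ^ γ = q k ^ (γ - 1) * q k := by
          rw [← Real.rpow_add_one (hq0 k).ne']; ring_nf
        rw [e2, e3]; ring
    _ < ∞ := by
        rw [ENNReal.tsum_mul_right]
        refine ENNReal.add_lt_top.2 ⟨ENNReal.mul_lt_top ENNReal.ofReal_lt_top hb.measure_lt_top,
          ENNReal.mul_lt_top ?_ hb.measure_lt_top⟩
        rw [← ENNReal.ofReal_tsum_of_nonneg]
        · exact ENNReal.ofReal_lt_top
        · intro k; positivity
        · refine Summable.mul_left _ (summable_geometric_of_lt_one (by positivity) ?_)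
          exact Real.rpow_lt_one (by norm_num) (by norm_num) hγ.1

lemma hess_integrable {n : ℕ} {Ω : Set (En n)} {ρ : ℝ} (hρ : 0 < ρ) (ho : IsOpen Ω)
    (hb : IsBounded Ω) (hne : (frontier Ω).Nonempty)
    (h : ∀ b : En n, ‖b‖ ≤ ρ → ∀ x ∈ Ω, ∀ τ ∈ Icc (0:ℝ) 1, b + τ • (x - b) ∈ Ω)
    {s : ℝ} {u : En n → ℝ} (hs : StarCond n s Ω u) :
    ∫⁻ x in Ω, ‖hess n u x‖ₑ < ∞ := by
  obtain ⟨C, hC, γ, hγ, hx⟩ := hs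
  have h1 := dist_integrable hρ ho hb hne h γ hγ
  calc ∫⁻ x in Ω, ‖hess n u x‖ₑ
      ≤ ∫⁻ x in Ω, ENNReal.ofReal C * ENNReal.ofReal (infDist x (frontier Ω) ^ (γ - 1)) := by
        refine setLIntegral_mono' ho.measurableSet fun x hxO => ?_
        rw [← ENNReal.ofReal_mul hC.le, ← ofReal_norm]
        exact ENNReal.ofReal_le_ofReal (hx x hxO).1
    _ = ENNReal.ofReal C * ∫⁻ x in Ω, ENNReal.ofReal (infDist x (frontier Ω) ^ (γ - 1)) :=
        lintegral_const_mul' _ _ ENNReal.ofReal_ne_top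
    _ < ∞ := ENNReal.mul_lt_top ENNReal.ofReal_lt_top h1


lemma kernel_integrable (n : ℕ) (hn : 1 ≤ n) (s θ : ℝ) (hs : 0 < s) (hθ : s < θ) :
    Integrable (fun z : En n => min (‖z‖ ^ θ) 1 * (‖z‖ ^ ((n : ℝ) + s))⁻¹) := by
  have : Nonempty (Fin n) := ⟨⟨0, hn⟩⟩
  have : Nontrivial (En n) := inferInstance
  rw [integrable_fun_norm_addHaar (μ := (volume : Measure (En n)))
    (f := fun r : ℝ => min (r ^ θ) 1 * (r ^ ((n : ℝ) + s))⁻¹)]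
  rw [finrank_euclideanSpace_fin]
  have key : ∀ r : ℝ, 0 < r → r ^ (n - 1) • (min (r ^ θ) 1 * (r ^ ((n : ℝ) + s))⁻¹)
      = min (r ^ θ) 1 * r ^ (-1 - s) := by
    intro r hr
    rw [smul_eq_mul, ← Real.rpow_natCast, ← Real.rpow_neg hr.le, mul_left_comm,
      ← Real.rpow_add hr]
    congr 2
    push_cast [Nat.cast_sub hn]; ring
  rw [← Ioc_union_Ioi_eq_Ioi (zero_le_one' ℝ), integrableOn_union]
  constructor
  · have h1 : IntegrableOn (fun r : ℝ => r ^ (θ - 1 - s)) (Ioc 0 1) := by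
      rw [← intervalIntegrable_iff_integrableOn_Ioc_of_le zero_le_one]
      exact intervalIntegral.intervalIntegrable_rpow' (by linarith)
    refine h1.congr_fun ?_ measurableSet_Ioc
    intro r hr
    simp only
    rw [key r hr.1, min_eq_left (Real.rpow_le_one hr.1.le hr.2 (by linarith)),
      ← Real.rpow_add hr.1]
    congr 1; ring
  · have h1 : IntegrableOn (fun r : ℝ => r ^ (-1 - s)) (Ioi 1) :=
      integrableOn_Ioi_rpow_of_lt (by linarith) one_pos
    refine h1.congr_fun ?_ measurableSet_Ioi
    intro r hr
    have hr1 : (1:ℝ) < r := hr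
    simp only
    rw [key r (by linarith), min_eq_right (Real.one_le_rpow hr1.le (by linarith)), one_mul]

lemma cs_lintegral {α : Type*} [MeasurableSpace α] (μ : Measure α) {f g : α → ℝ≥0∞}
    (hf : AEMeasurable f μ) (hg : AEMeasurable g μ) :
    (∫⁻ a, f a * g a ∂μ) ^ 2 ≤ (∫⁻ a, f a ^ 2 ∂μ) * ∫⁻ a, g a ^ 2 ∂μ := by
  have h := ENNReal.lintegral_mul_le_Lp_mul_Lq μ Real.HolderConjugate.two_two hf hg
  simp only [Pi.mul_apply] at h
  have h2 := pow_le_pow_left' h 2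
  refine h2.trans (le_of_eq ?_)
  rw [mul_pow, ← ENNReal.rpow_natCast, ← ENNReal.rpow_natCast, ← ENNReal.rpow_mul,
    ← ENNReal.rpow_mul]
  norm_num

lemma mink (n : ℕ) (hn : 1 ≤ n) (s : ℝ) (hs : s ∈ Ioo (0:ℝ) 1) (θ : ℝ) (hθ : θ ∈ Ioo s 1) :
    ∃ K : ℝ, 0 ≤ K ∧ ∀ (w : En n → ℝ) (C t : ℝ), Continuous w → 0 ≤ C → 0 < t → t ≤ 1 →
      (∀ z, ∫⁻ x, ‖w x - w (x + z)‖ₑ ^ 2 ≤ ENNReal.ofReal (C * t * ‖z‖ ^ 2)) →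
      (∀ z, ∫⁻ x, ‖w x - w (x + z)‖ₑ ^ 2 ≤ ENNReal.ofReal (C * t ^ 2)) →
      ∫⁻ x, ‖fracHalf n s w x‖ₑ ^ 2 ≤ ENNReal.ofReal (K * C * t ^ (2 - θ)) := by
  have hJ := kernel_integrable n hn s θ hs.1 hθ.1
  set m : En n → ℝ := fun z => min (‖z‖ ^ θ) 1 with hm
  set k : En n → ℝ := fun z => (‖z‖ ^ ((n : ℝ) + s))⁻¹ with hk
  have hm0 : ∀ z, 0 ≤ m z := fun z => by positivity
  have hk0 : ∀ z, 0 ≤ k z := fun z => by positivity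
  have hmm : Measurable m := by fun_prop
  have hkm : Measurable k := by fun_prop
  set I : ℝ := ∫ z, m z * k z with hI
  have hI0 : 0 ≤ I := integral_nonneg fun z => mul_nonneg (hm0 z) (hk0 z)
  have hIl : ∫⁻ z, ENNReal.ofReal (m z * k z) = ENNReal.ofReal I :=
    (ofReal_integral_eq_lintegral_ofReal hJ
      (Eventually.of_forall fun z => mul_nonneg (hm0 z) (hk0 z))).symm
  refine ⟨(cK n (s/2)) ^ 2 * I ^ 2, by positivity, ?_⟩
  intro w C t hw hC ht ht1 hA hB
  have hN : ∀ z, ∫⁻ x, ‖w x - w (x + z)‖ₑ ^ 2 ≤ ENNReal.ofReal (C * t ^ (2 - θ) * m z ^ 2) := by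
    intro z
    have ht2 : t ^ (2:ℕ) ≤ t ^ (2 - θ) := by
      rw [← Real.rpow_natCast]
      exact Real.rpow_le_rpow_of_exponent_ge ht ht1 (by push_cast; linarith [hθ.1, hs.1])
    have hθ0 : 0 < θ := by linarith [hθ.1, hs.1]
    rcases le_total ‖z‖ 1 with hz | hz
    · have hmz : m z = ‖z‖ ^ θ := min_eq_left (Real.rpow_le_one (norm_nonneg _) hz hθ0.le)
      rw [hmz]
      rcases le_total (‖z‖ ^ 2) t with h | h
      · refine (hA z).trans (ENNReal.ofReal_le_ofReal ?_)
        rcases eq_or_lt_of_le (norm_nonneg z) with h0 | h0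
        · rw [← h0, Real.zero_rpow hθ0.ne']; simp
        · rw [mul_assoc, mul_assoc]
          refine mul_le_mul_of_nonneg_left ?_ hC
          have e1 : t ^ (2 - θ) = t * t ^ (1 - θ) := by
            rw [← Real.rpow_one_add' ht.le (by linarith [hθ.2])]; ring_nf
          have e2 : ‖z‖ ^ 2 = (‖z‖ ^ 2) ^ (1 - θ) * (‖z‖ ^ θ) ^ 2 := by
            rw [← Real.rpow_natCast, ← Real.rpow_natCast, ← Real.rpow_mul h0.le,
              ← Real.rpow_mul h0.le, ← Real.rpow_add h0]
            congr 1; push_cast; ring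
          rw [e1, mul_assoc]
          refine mul_le_mul_of_nonneg_left ?_ ht.le
          calc ‖z‖ ^ 2 = (‖z‖ ^ 2) ^ (1 - θ) * (‖z‖ ^ θ) ^ 2 := e2
            _ ≤ t ^ (1 - θ) * (‖z‖ ^ θ) ^ 2 := by
              gcongr
              linarith [hθ.2]
      · refine (hB z).trans (ENNReal.ofReal_le_ofReal ?_)
        rw [mul_assoc]
        refine mul_le_mul_of_nonneg_left ?_ hC
        have e1 : (‖z‖ ^ θ) ^ 2 = (‖z‖ ^ 2) ^ θ := by
          rw [← Real.rpow_natCast, ← Real.rpow_natCast, ← Real.rpow_mul (norm_nonneg _),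
            ← Real.rpow_mul (norm_nonneg _), mul_comm]
        have e2 : t ^ 2 = t ^ (2 - θ) * t ^ θ := by
          rw [← Real.rpow_add ht, ← Real.rpow_natCast]; congr 1; push_cast; ring
        rw [e1, e2]
        gcongr
    · have hmz : m z = 1 := min_eq_right (Real.one_le_rpow hz hθ0.le)
      rw [hmz]
      refine (hB z).trans (ENNReal.ofReal_le_ofReal ?_)
      rw [one_pow, mul_one]
      exact mul_le_mul_of_nonneg_left ht2 hC
  have hpt : ∀ x, ‖fracHalf n s w x‖ₑ ^ 2 ≤ ENNReal.ofReal (cK n (s/2) ^ 2) *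
      (ENNReal.ofReal I * ∫⁻ z, ENNReal.ofReal (k z / m z) * ‖w x - w (x + z)‖ₑ ^ 2) := by
    intro x
    rw [fracHalf, enorm_mul, mul_pow]
    have e0 : ‖cK n (s/2)‖ₑ ^ 2 = ENNReal.ofReal (cK n (s/2) ^ 2) := by
      rw [← ofReal_norm, ← ENNReal.ofReal_pow (norm_nonneg _), Real.norm_eq_abs, sq_abs]
    rw [e0]
    gcongr
    have h1 : ‖∫ z : En n, (w x - w (x + z)) / ‖z‖ ^ ((n : ℝ) + s)‖ₑ
        ≤ ∫⁻ z, ENNReal.ofReal (√(m z * k z)) *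
          ENNReal.ofReal (√(k z / m z) * |w x - w (x + z)|) := by
      refine (enorm_integral_le_lintegral_enorm _).trans (lintegral_mono fun z => ?_)
      rw [← ENNReal.ofReal_mul (by positivity), ← ofReal_norm]
      refine ENNReal.ofReal_le_ofReal ?_
      rw [← mul_assoc, ← Real.sqrt_mul (mul_nonneg (hm0 z) (hk0 z)), norm_div, div_eq_mul_inv,
        mul_comm, Real.norm_eq_abs, Real.norm_eq_abs]
      refine mul_le_mul_of_nonneg_right ?_ (abs_nonneg _)
      rw [abs_of_nonneg (by positivity)]
      refine Real.le_sqrt_of_sq_le ?_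
      change k z ^ 2 ≤ _
      rcases eq_or_ne z 0 with hz | hz
      · have hns : (n : ℝ) + s ≠ 0 := by have := hs.1; positivity
        have : k z = 0 := by simp [hk, hz, Real.zero_rpow hns]
        rw [this]; simp
      · have : 0 < m z := by
          have := norm_pos_iff.2 hz
          positivity
        refine le_of_eq ?_
        field_simp
    refine (pow_le_pow_left' h1 2).trans ?_
    refine (cs_lintegral _ (by fun_prop) (by fun_prop)).trans (le_of_eq ?_)
    rw [← hIl]
    congr 1
    · refine lintegral_congr fun z => ?_
      rw [← ENNReal.ofReal_pow (by positivity), Real.sq_sqrt (mul_nonneg (hm0 z) (hk0 z))]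
    · refine lintegral_congr fun z => ?_
      rw [← ENNReal.ofReal_pow (by positivity), mul_pow,
        Real.sq_sqrt (div_nonneg (hk0 z) (hm0 z)), sq_abs,
        ENNReal.ofReal_mul (div_nonneg (hk0 z) (hm0 z)), ← ofReal_norm,
        ← ENNReal.ofReal_pow (norm_nonneg _), Real.norm_eq_abs, sq_abs]
  calc ∫⁻ x, ‖fracHalf n s w x‖ₑ ^ 2
      ≤ ∫⁻ x, ENNReal.ofReal (cK n (s/2) ^ 2) *
      (ENNReal.ofReal I * ∫⁻ z, ENNReal.ofReal (k z / m z) * ‖w x - w (x + z)‖ₑ ^ 2) :=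
        lintegral_mono hpt
    _ = ENNReal.ofReal (cK n (s/2) ^ 2) * (ENNReal.ofReal I *
        ∫⁻ x, ∫⁻ z, ENNReal.ofReal (k z / m z) * ‖w x - w (x + z)‖ₑ ^ 2) := by
        rw [lintegral_const_mul' _ _ ENNReal.ofReal_ne_top,
          lintegral_const_mul' _ _ ENNReal.ofReal_ne_top]
    _ = ENNReal.ofReal (cK n (s/2) ^ 2) * (ENNReal.ofReal I *
        ∫⁻ z, ENNReal.ofReal (k z / m z) * ∫⁻ x, ‖w x - w (x + z)‖ₑ ^ 2) := by
        rw [lintegral_lintegral_swap (by fun_prop)]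
        congr 2
        refine lintegral_congr fun z => ?_
        rw [lintegral_const_mul' _ _ ENNReal.ofReal_ne_top]
    _ ≤ ENNReal.ofReal (cK n (s/2) ^ 2) * (ENNReal.ofReal I *
        ∫⁻ z, ENNReal.ofReal (C * t ^ (2 - θ)) * ENNReal.ofReal (m z * k z)) := by
        refine mul_le_mul_right (mul_le_mul_right (lintegral_mono fun z => ?_) _) _
        refine (mul_le_mul_right (hN z) _).trans (le_of_eq ?_)
        rw [← ENNReal.ofReal_mul (div_nonneg (hk0 z) (hm0 z)),
          ← ENNReal.ofReal_mul (by positivity)]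
        congr 1
        rcases eq_or_ne (m z) 0 with h | h
        · simp [h]
        · field_simp
    _ = ENNReal.ofReal (cK n (s/2) ^ 2 * I ^ 2 * C * t ^ (2 - θ)) := by
        rw [lintegral_const_mul' _ _ ENNReal.ofReal_ne_top, hIl,
          ← ENNReal.ofReal_mul (by positivity), ← ENNReal.ofReal_mul (by positivity),
          ← ENNReal.ofReal_mul (by positivity)]
        congr 1; ring

lemma frac_integrable (n : ℕ) (hn : 1 ≤ n) (s : ℝ) (hs : s ∈ Ioo (0:ℝ) 1) (w : En n → ℝ)
    (M : ℝ) (hM : ∀ x, |w x| ≤ M) (L : ℝ≥0) (hL : LipschitzWith L w) (x : En n) :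
    Integrable (fun z : En n => (w x - w (x + z)) / ‖z‖ ^ ((n : ℝ) + s)) := by
  have hJ := (kernel_integrable n hn s 1 hs.1 hs.2).const_mul (max (L : ℝ) (2 * M))
  have hwc := hL.continuous
  refine hJ.mono' ?_ (Eventually.of_forall fun z => ?_)
  · have : Measurable (fun z : En n => (w x - w (x + z)) / ‖z‖ ^ ((n : ℝ) + s)) := by fun_prop
    exact this.aestronglyMeasurable
  · rw [norm_div, div_eq_mul_inv, ← mul_assoc, Real.norm_of_nonneg (r := ‖z‖ ^ _) (by positivity)]
    refine mul_le_mul_of_nonneg_right ?_ (by positivity)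
    rw [Real.rpow_one, Real.norm_eq_abs]
    have h1 : |w x - w (x + z)| ≤ L * ‖z‖ := by
      have := hL.dist_le_mul x (x + z)
      rwa [Real.dist_eq, dist_self_add_right] at this
    have h2 : |w x - w (x + z)| ≤ 2 * M := by
      have := abs_sub (w x) (w (x + z))
      linarith [hM x, hM (x + z)]
    have h3 := le_max_left (L : ℝ) (2 * M)
    have h4 := le_max_right (L : ℝ) (2 * M)
    rcases le_total ‖z‖ 1 with h | h
    · rw [min_eq_left h]
      exact h1.trans (mul_le_mul_of_nonneg_right h3 (norm_nonneg _))
    · rw [min_eq_right h, mul_one]; linarith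

lemma fracHalf_scale (n : ℕ) (s : ℝ) (u : En n → ℝ) (κ : ℝ) (hκ : 0 < κ) (x : En n) :
    fracHalf n s (fun y => u (κ • y)) x = κ ^ s * fracHalf n s u (κ • x) := by
  unfold fracHalf
  have h := Measure.integral_comp_smul (volume : Measure (En n))
    (fun z => (u (κ • x) - u (κ • x + z)) / ‖z‖ ^ ((n : ℝ) + s)) κ
  rw [finrank_euclideanSpace_fin, abs_of_nonneg (by positivity), smul_eq_mul] at h
  have h2 : ∫ z : En n, (u (κ • x) - u (κ • (x + z))) / ‖z‖ ^ ((n : ℝ) + s)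
      = κ ^ ((n : ℝ) + s) *
        ∫ z : En n, (u (κ • x) - u (κ • x + κ • z)) / ‖κ • z‖ ^ ((n : ℝ) + s) := by
    rw [← integral_const_mul]
    refine integral_congr_ae (Eventually.of_forall fun z => ?_)
    simp only
    rw [norm_smul, Real.norm_of_nonneg hκ.le, Real.mul_rpow hκ.le (norm_nonneg _), smul_add]
    have : κ ^ ((n : ℝ) + s) ≠ 0 := by positivity
    rw [mul_div_assoc', mul_div_mul_left _ _ this]
  rw [h2, h, Real.rpow_add hκ, Real.rpow_natCast]
  have : κ ^ n ≠ 0 := by positivity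
  field_simp

lemma fracHalf_comb (n : ℕ) (hn : 1 ≤ n) (s : ℝ) (hs : s ∈ Ioo (0:ℝ) 1) (u : En n → ℝ)
    (M : ℝ) (hM : ∀ x, |u x| ≤ M) (L : ℝ≥0) (hL : LipschitzWith L u) (α κ : ℝ) (hκ : 0 < κ)
    (x : En n) :
    fracHalf n s (fun y => α * u (κ • y) - u y) x
      = α * κ ^ s * fracHalf n s u (κ • x) - fracHalf n s u x := by
  have hL2 : LipschitzWith (L * ‖κ‖₊) (fun y => u (κ • y)) := hL.comp (lipschitzWith_smul κ)
  have i1 := frac_integrable n hn s hs (fun y => u (κ • y)) M (fun x => hM _) _ hL2 x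
  have i2 := frac_integrable n hn s hs u M hM L hL x
  rw [mul_assoc, ← fracHalf_scale n s u κ hκ x]
  unfold fracHalf
  have : ∫ z : En n, (α * u (κ • x) - u x - (α * u (κ • (x + z)) - u (x + z)))
        / ‖z‖ ^ ((n : ℝ) + s)
      = α * (∫ z : En n, (u (κ • x) - u (κ • (x + z))) / ‖z‖ ^ ((n : ℝ) + s))
        - ∫ z : En n, (u x - u (x + z)) / ‖z‖ ^ ((n : ℝ) + s) := by
    rw [← integral_const_mul, ← integral_sub (i1.const_mul α) i2]
    refine integral_congr_ae (Eventually.of_forall fun z => ?_)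
    simp only
    ring
  rw [this]; ring

lemma fracHalf_meas (n : ℕ) (s : ℝ) (u : En n → ℝ) (hu : Continuous u) :
    StronglyMeasurable (fracHalf n s u) := by
  unfold fracHalf
  refine StronglyMeasurable.const_mul ?_ _
  have : StronglyMeasurable (Function.uncurry fun (x z : En n) =>
      (u x - u (x + z)) / ‖z‖ ^ ((n : ℝ) + s)) := by
    apply Measurable.stronglyMeasurable
    unfold Function.uncurry
    fun_prop
  exact this.integral_prod_right


lemma lintegral_smul_le {n : ℕ} (f : En n → ℝ≥0∞) (hf : Measurable f) (τ : ℝ) (hτ : 1 ≤ τ) :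
    ∫⁻ x, f (τ • x) ≤ ∫⁻ x, f x := by
  have h0 : τ ≠ 0 := by positivity
  have h1 := lintegral_map (μ := (volume : Measure (En n))) hf (measurable_const_smul τ)
  rw [← h1, Measure.map_addHaar_smul _ h0, lintegral_smul_measure]
  have : ENNReal.ofReal |(τ ^ Module.finrank ℝ (En n))⁻¹| ≤ 1 := by
    rw [ENNReal.ofReal_le_one, abs_of_nonneg (by positivity)]
    exact inv_le_one_of_one_le₀ (one_le_pow₀ hτ)
  calc _ ≤ (1:ℝ≥0∞) • ∫⁻ x, f x := by
        rw [smul_eq_mul, smul_eq_mul]; gcongr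
    _ = _ := one_smul _ _

lemma l1_diff {n : ℕ} (w : En n → ℝ) (L : ℝ≥0) (hL : LipschitzWith L w) (z : En n) :
    ∫⁻ x, ‖w x - w (x + z)‖ₑ ≤ ∫⁻ x, ‖lineDeriv ℝ w x z‖ₑ := by
  have hwc := hL.continuous
  have hm : Measurable (fun x => lineDeriv ℝ w x z) := measurable_lineDeriv hwc
  have hpt : ∀ x, ‖w x - w (x + z)‖ₑ
      ≤ ∫⁻ τ in Ioc (0:ℝ) 1, ‖lineDeriv ℝ w (x + τ • z) z‖ₑ := by
    intro x
    have hlip : LipschitzWith (L * ‖z‖₊) (fun τ : ℝ => w (x + τ • z)) := by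
      refine hL.comp (LipschitzWith.of_dist_le_mul fun a b => ?_)
      rw [dist_add_left, dist_eq_norm, ← sub_smul, norm_smul, mul_comm, dist_eq_norm]; rfl
    have hftc := (hlip.lipschitzOnWith (s := uIcc 0 1)).absolutelyContinuousOnInterval.integral_deriv_eq_sub
    simp only [one_smul, zero_smul, add_zero] at hftc
    have hd : ∀ τ : ℝ, deriv (fun τ : ℝ => w (x + τ • z)) τ = lineDeriv ℝ w (x + τ • z) z := by
      intro τ
      have := deriv_comp_const_add (fun τ : ℝ => w (x + τ • z)) τ 0
      rw [add_zero] at this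
      rw [← this, lineDeriv]
      congr 1
      funext t
      rw [add_smul, add_assoc]
    rw [enorm_sub_rev, ← hftc, intervalIntegral.integral_of_le zero_le_one]
    refine (enorm_integral_le_lintegral_enorm _).trans (le_of_eq ?_)
    refine lintegral_congr fun τ => ?_
    rw [hd]
  calc ∫⁻ x, ‖w x - w (x + z)‖ₑ
      ≤ ∫⁻ x, ∫⁻ τ in Ioc (0:ℝ) 1, ‖lineDeriv ℝ w (x + τ • z) z‖ₑ := lintegral_mono hpt
    _ = ∫⁻ τ in Ioc (0:ℝ) 1, ∫⁻ x, ‖lineDeriv ℝ w (x + τ • z) z‖ₑ := by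
        refine lintegral_lintegral_swap ?_
        refine Measurable.aemeasurable ?_
        refine Measurable.enorm ?_
        exact hm.comp (f := fun p : En n × ℝ => p.1 + p.2 • z) (by fun_prop)
    _ = ∫⁻ τ in Ioc (0:ℝ) 1, ∫⁻ x, ‖lineDeriv ℝ w x z‖ₑ := by
        refine lintegral_congr fun τ => ?_
        exact lintegral_add_right_eq_self (fun x => ‖lineDeriv ℝ w x z‖ₑ) (τ • z)
    _ = _ := by simp

lemma fderiv_diff {n : ℕ} {Ω : Set (En n)} (ho : IsOpen Ω) {u : En n → ℝ}
    (hu2 : ContDiffOn ℝ 2 u Ω) (κ : ℝ) (hκ : 1 ≤ κ) (x : En n)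
    (hx : ∀ τ ∈ Icc 1 κ, τ • x ∈ Ω) :
    ‖fderiv ℝ u (κ • x) - fderiv ℝ u x‖ₑ ≤
      ∫⁻ τ in Ioc 1 κ, ‖hess n u (τ • x)‖ₑ * ‖x‖ₑ := by
  have h1 : ContDiffOn ℝ 1 (fderiv ℝ u) Ω := hu2.fderiv_of_isOpen ho (by norm_num)
  have h2 : ContinuousOn (hess n u) Ω := h1.continuousOn_fderiv_of_isOpen ho (by norm_num)
  have hd : ∀ τ ∈ uIcc 1 κ, HasDerivAt (fun τ : ℝ => fderiv ℝ u (τ • x))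
      (hess n u (τ • x) x) τ := by
    intro τ hτ
    rw [uIcc_of_le hκ] at hτ
    have hd1 : DifferentiableAt ℝ (fderiv ℝ u) (τ • x) :=
      (h1.differentiableOn (by norm_num)).differentiableAt (ho.mem_nhds (hx τ hτ))
    have hd2 : HasDerivAt (fun τ : ℝ => τ • x) x τ := by
      simpa using (hasDerivAt_id τ).smul_const x
    exact hd1.hasFDerivAt.comp_hasDerivAt τ hd2
  have hc : ContinuousOn (fun τ : ℝ => hess n u (τ • x) x) (uIcc 1 κ) := by
    rw [uIcc_of_le hκ]
    refine ContinuousOn.clm_apply ?_ continuousOn_const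
    exact h2.comp (by fun_prop) hx
  have hi := intervalIntegral.integral_eq_sub_of_hasDerivAt hd hc.intervalIntegrable
  rw [one_smul] at hi
  rw [← hi, intervalIntegral.integral_of_le hκ]
  refine (enorm_integral_le_lintegral_enorm _).trans (lintegral_mono fun τ => ?_)
  exact ContinuousLinearMap.le_opENorm _ _

lemma tv_bound {n : ℕ} {Ω : Set (En n)} {ρ : ℝ} (hρ : 0 < ρ) (ho : IsOpen Ω)
    (hb : IsBounded Ω)
    (h : ∀ b : En n, ‖b‖ ≤ ρ → ∀ x ∈ Ω, ∀ τ ∈ Icc (0:ℝ) 1, b + τ • (x - b) ∈ Ω)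
    {u : En n → ℝ} (hu2 : ContDiffOn ℝ 2 u Ω) (L : ℝ≥0) (hL : LipschitzWith L u)
    (hzero : ∀ x ∉ Ω, u x = 0) (hH : ∫⁻ x in Ω, ‖hess n u x‖ₑ < ∞) (A : ℝ) (hA : 0 ≤ A) :
    ∃ C : ℝ, 0 ≤ C ∧ ∀ κ α : ℝ, κ ∈ Ioc (1:ℝ) 2 → |α - 1| ≤ A * (κ - 1) → ∀ z : En n,
      ∫⁻ x, ‖lineDeriv ℝ (fun y => α * u (κ • y) - u y) x z‖ₑ
        ≤ ENNReal.ofReal (C * (κ - 1) * ‖z‖) := by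
  have hfin : volume Ω ≠ ∞ := hb.measure_lt_top.ne
  obtain ⟨R, hR⟩ := hb.exists_norm_le
  set V := (volume Ω).toReal with hV
  have hVe : volume Ω = ENNReal.ofReal V := (ENNReal.ofReal_toReal hfin).symm
  set H := (∫⁻ x in Ω, ‖hess n u x‖ₑ).toReal with hHd
  have hHe : ∫⁻ x in Ω, ‖hess n u x‖ₑ = ENNReal.ofReal H := (ENNReal.ofReal_toReal hH.ne).symm
  have hV0 : 0 ≤ V := ENNReal.toReal_nonneg
  have hH0 : 0 ≤ H := ENNReal.toReal_nonneg
  refine ⟨(2 * A + 1) * L * V + |R| * H * (1 + 2 * (1 + A))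
    + (2 * (1 + A) + 1) * L * (n * 2 * 2 ^ n * V), by positivity, ?_⟩
  intro κ α hκ hα z
  have hκ0 : 0 < κ := by linarith [hκ.1]
  have hκ1 : 0 < κ - 1 := by linarith [hκ.1]
  have hshr : ∀ x ∈ closure Ω, ∀ τ ∈ Ico (0:ℝ) 1, τ • x ∈ Ω :=
    fun x hx τ hτ => shrink_closure hρ h x hx τ hτ
  have hα1 : |α| ≤ 1 + A := by
    have h1 : |α| ≤ |α - 1| + 1 := by
      have := abs_add_le (α - 1) 1
      simpa using this
    nlinarith [hκ.2]
  set w : En n → ℝ := fun y => α * u (κ • y) - u y with hw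
  have hwL : ∀ x, ‖lineDeriv ℝ w x z‖ ≤ ((2 * (1 + A) + 1) * L) * ‖z‖ := by
    intro x
    refine norm_lineDeriv_le_of_lip' ℝ (by positivity) (Eventually.of_forall fun y => ?_)
    have e : w y - w x = α * (u (κ • y) - u (κ • x)) - (u y - u x) := by simp only [hw]; ring
    have l1 := hL.norm_sub_le (κ • y) (κ • x)
    have l2 := hL.norm_sub_le y x
    rw [← smul_sub, norm_smul, Real.norm_of_nonneg hκ0.le] at l1
    rw [e]
    refine (norm_sub_le _ _).trans ?_
    rw [norm_mul, Real.norm_eq_abs α]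
    have l3 : |α| * ‖u (κ • y) - u (κ • x)‖ ≤ (1 + A) * (L * (2 * ‖y - x‖)) := by
      refine mul_le_mul hα1 (l1.trans ?_) (norm_nonneg _) (by positivity)
      have := hκ.2
      gcongr
    linarith
  set S : Set (En n) := κ • Ω with hS
  set E : Set (En n) := κ⁻¹ • Ω with hE
  have hSo : IsOpen S := ho.smul₀ hκ0.ne'
  have hEo : IsOpen E := ho.smul₀ (inv_ne_zero hκ0.ne')
  have hEΩ : E ⊆ Ω := by
    rintro _ ⟨x, hx, rfl⟩
    exact hshr x (subset_closure hx) _ ⟨by positivity, inv_lt_one_of_one_lt₀ hκ.1⟩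
  have hclS : closure Ω ⊆ S := by
    intro x hx
    exact (mem_smul_set_iff_inv_smul_mem₀ hκ0.ne' _ _).2
      (hshr x hx _ ⟨by positivity, inv_lt_one_of_one_lt₀ hκ.1⟩)
  have hSm := hSo.measurableSet
  have hEm := hEo.measurableSet
  -- the Hessian function extended by zero
  set Hf : En n → ℝ≥0∞ := Ω.indicator (fun x => ‖hess n u x‖ₑ) with hHf
  have hhm : Measurable (hess n u) := measurable_fderiv ℝ (fderiv ℝ u)
  have hhe : Measurable (fun x => ‖hess n u x‖ₑ) := by
    have := hhm.norm.ennreal_ofReal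
    have e : (fun x => ‖hess n u x‖ₑ) = fun x => ENNReal.ofReal ‖hess n u x‖ := by
      funext x; exact (ofReal_norm _).symm
    rw [e]; exact this
  have hHfm : Measurable Hf := hhe.indicator ho.measurableSet
  -- pointwise bound
  have hpt : ∀ x, ‖lineDeriv ℝ w x z‖ₑ ≤ ‖z‖ₑ * (
      E.indicator (fun _ => ENNReal.ofReal ((2 * A + 1) * (κ - 1) * L)) x
      + ENNReal.ofReal (2 * (1 + A) * |R|) * (∫⁻ τ in Ioc 1 κ, Hf (τ • x))
      + (S \ E).indicator (fun _ => ENNReal.ofReal ((2 * (1 + A) + 1) * L)) x) := by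
    intro x
    by_cases hxE : x ∈ E
    · have hκx : κ • x ∈ Ω := by
        have := (mem_smul_set_iff_inv_smul_mem₀ (inv_ne_zero hκ0.ne') _ _).1 hxE
        rwa [inv_inv] at this
      have hseg : ∀ τ ∈ Icc 1 κ, τ • x ∈ Ω := by
        intro τ hτ
        rcases eq_or_lt_of_le hτ.2 with h' | h'
        · rw [h']; exact hκx
        · have := hshr (κ • x) (subset_closure hκx) (τ / κ)
            ⟨div_nonneg (by linarith [hτ.1]) hκ0.le, (div_lt_one hκ0).2 h'⟩
          rwa [smul_smul, div_mul_cancel₀ _ hκ0.ne'] at this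
      have hxΩ : x ∈ Ω := hEΩ hxE
      have hdiff : ∀ y ∈ Ω, DifferentiableAt ℝ u y := fun y hy =>
        (hu2.differentiableOn (by norm_num)).differentiableAt (ho.mem_nhds hy)
      have hld : lineDeriv ℝ w x z = α * (κ * fderiv ℝ u (κ • x) z) - fderiv ℝ u x z := by
        have h1 : HasFDerivAt w (α • ((fderiv ℝ u (κ • x)).comp
            (κ • ContinuousLinearMap.id ℝ (En n))) - fderiv ℝ u x) x := by
          refine HasFDerivAt.sub (HasFDerivAt.const_mul ?_ α) (hdiff x hxΩ).hasFDerivAt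
          exact (hdiff _ hκx).hasFDerivAt.comp x ((hasFDerivAt_id x).const_smul κ)
        rw [(h1.hasLineDerivAt z).lineDeriv]
        simp
      have hsplit : lineDeriv ℝ w x z = (α * κ - 1) * fderiv ℝ u x z
          + α * κ * (fderiv ℝ u (κ • x) - fderiv ℝ u x) z := by
        rw [hld, _root_.sub_apply]; ring
      have hb1 : ‖(α * κ - 1) * fderiv ℝ u x z‖ₑ
          ≤ ‖z‖ₑ * ENNReal.ofReal ((2 * A + 1) * (κ - 1) * L) := by
        rw [← ofReal_norm, ← ofReal_norm, ← ENNReal.ofReal_mul (norm_nonneg _)]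
        refine ENNReal.ofReal_le_ofReal ?_
        rw [norm_mul, Real.norm_eq_abs]
        have e1 : |α * κ - 1| ≤ (2 * A + 1) * (κ - 1) := by
          have e : α * κ - 1 = (α - 1) * κ + (κ - 1) := by ring
          rw [e]
          refine (abs_add_le _ _).trans ?_
          rw [abs_mul, abs_of_pos hκ0, abs_of_pos hκ1]
          have : |α - 1| * κ ≤ A * (κ - 1) * 2 := by
            exact mul_le_mul hα hκ.2 hκ0.le (by positivity)
          linarith
        have e2 : ‖fderiv ℝ u x z‖ ≤ L * ‖z‖ := by
          refine (ContinuousLinearMap.le_opNorm _ _).trans ?_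
          gcongr
          exact norm_fderiv_le_of_lipschitz ℝ hL
        calc |α * κ - 1| * ‖fderiv ℝ u x z‖ ≤ ((2 * A + 1) * (κ - 1)) * (L * ‖z‖) := by
              gcongr
          _ = _ := by ring
      have hb2 : ‖α * κ * (fderiv ℝ u (κ • x) - fderiv ℝ u x) z‖ₑ
          ≤ ‖z‖ₑ * (ENNReal.ofReal (2 * (1 + A) * |R|) * (∫⁻ τ in Ioc 1 κ, Hf (τ • x))) := by
        have f1 := fderiv_diff ho hu2 κ hκ.1.le x hseg
        have f2 : ∫⁻ τ in Ioc 1 κ, ‖hess n u (τ • x)‖ₑ * ‖x‖ₑ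
            ≤ (∫⁻ τ in Ioc 1 κ, Hf (τ • x)) * ENNReal.ofReal |R| := by
          rw [← lintegral_mul_const' _ _ ENNReal.ofReal_ne_top]
          refine setLIntegral_mono' measurableSet_Ioc fun τ hτ => ?_
          rw [hHf, indicator_of_mem (hseg τ ⟨hτ.1.le, hτ.2⟩)]
          gcongr
          rw [← ofReal_norm]
          exact ENNReal.ofReal_le_ofReal ((hR x hxΩ).trans (le_abs_self R))
        have f3 : ‖α * κ‖ₑ ≤ ENNReal.ofReal (2 * (1 + A)) := by
          rw [← ofReal_norm]
          refine ENNReal.ofReal_le_ofReal ?_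
          rw [norm_mul, Real.norm_of_nonneg hκ0.le, Real.norm_eq_abs, mul_comm]
          exact mul_le_mul hκ.2 hα1 (abs_nonneg _) (by norm_num)
        rw [enorm_mul]
        calc _ ≤ ENNReal.ofReal (2 * (1 + A)) * (((∫⁻ τ in Ioc 1 κ, Hf (τ • x))
                * ENNReal.ofReal |R|) * ‖z‖ₑ) := by
              gcongr
              exact (ContinuousLinearMap.le_opENorm _ _).trans
                (mul_le_mul_left (f1.trans f2) _)
          _ = _ := by
              rw [ENNReal.ofReal_mul (p := 2 * (1 + A)) (by positivity)]; ring
      rw [indicator_of_mem hxE, hsplit]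
      refine (enorm_add_le _ _).trans ?_
      rw [mul_add, mul_add]
      exact le_add_right (add_le_add hb1 hb2)
    · by_cases hxS : x ∈ S
      · rw [indicator_of_mem (show x ∈ S \ E from ⟨hxS, hxE⟩), mul_add]
        refine le_add_left ?_
        rw [← ofReal_norm, ← ofReal_norm, ← ENNReal.ofReal_mul (norm_nonneg _)]
        refine ENNReal.ofReal_le_ofReal ?_
        rw [mul_comm]; exact hwL x
      · have hxc : x ∈ (closure Ω)ᶜ := fun hh => hxS (hclS hh)
        have hev : w =ᶠ[nhds x] fun _ => 0 := by
          filter_upwards [isClosed_closure.isOpen_compl.mem_nhds hxc] with y hy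
          have hy1 : y ∉ Ω := fun hh => hy (subset_closure hh)
          have hy2 : κ • y ∉ Ω := fun hh => hy1 (hEΩ (by
            rw [hE, mem_smul_set_iff_inv_smul_mem₀ (inv_ne_zero hκ0.ne'), inv_inv]; exact hh))
          simp only [hw, hzero _ hy1, hzero _ hy2]; ring
        have : lineDeriv ℝ w x z = 0 := by
          rw [hev.lineDeriv_eq]; simp [lineDeriv]
        rw [this]; simp
  calc ∫⁻ x, ‖lineDeriv ℝ w x z‖ₑ
      ≤ ∫⁻ x, ‖z‖ₑ * (
      E.indicator (fun _ => ENNReal.ofReal ((2 * A + 1) * (κ - 1) * L)) x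
      + ENNReal.ofReal (2 * (1 + A) * |R|) * (∫⁻ τ in Ioc 1 κ, Hf (τ • x))
      + (S \ E).indicator (fun _ => ENNReal.ofReal ((2 * (1 + A) + 1) * L)) x) :=
        lintegral_mono hpt
    _ = ‖z‖ₑ * (ENNReal.ofReal ((2 * A + 1) * (κ - 1) * L) * volume E
        + ENNReal.ofReal (2 * (1 + A) * |R|) * (∫⁻ x, ∫⁻ τ in Ioc 1 κ, Hf (τ • x))
        + ENNReal.ofReal ((2 * (1 + A) + 1) * L) * volume (S \ E)) := by
        rw [lintegral_const_mul' _ _ enorm_ne_top,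
          lintegral_add_right _ (measurable_const.indicator (hSm.diff hEm)),
          lintegral_add_left (measurable_const.indicator hEm),
          lintegral_const_mul' _ _ ENNReal.ofReal_ne_top, lintegral_indicator_const hEm,
          lintegral_indicator_const (hSm.diff hEm)]
    _ ≤ ‖z‖ₑ * (ENNReal.ofReal ((2 * A + 1) * (κ - 1) * L) * ENNReal.ofReal V
        + ENNReal.ofReal (2 * (1 + A) * |R|) * (ENNReal.ofReal ((κ - 1) * H))
        + ENNReal.ofReal ((2 * (1 + A) + 1) * L)
          * ENNReal.ofReal (n * 2 * 2 ^ n * V * (κ - 1))) := by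
        have g1 : volume E ≤ ENNReal.ofReal V := hVe ▸ measure_mono hEΩ
        have g2 : ∫⁻ x, ∫⁻ τ in Ioc 1 κ, Hf (τ • x) ≤ ENNReal.ofReal ((κ - 1) * H) := by
          rw [lintegral_lintegral_swap]
          · calc ∫⁻ τ in Ioc 1 κ, ∫⁻ x, Hf (τ • x)
                ≤ ∫⁻ τ in Ioc 1 κ, ENNReal.ofReal H := by
                  refine setLIntegral_mono' measurableSet_Ioc fun τ hτ => ?_
                  refine (lintegral_smul_le Hf hHfm τ hτ.1.le).trans (le_of_eq ?_)
                  rw [hHf, lintegral_indicator ho.measurableSet, hHe]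
              _ = _ := by
                  rw [setLIntegral_const, Real.volume_Ioc, mul_comm,
                    ← ENNReal.ofReal_mul hκ1.le]
          · refine Measurable.aemeasurable ?_
            exact hHfm.comp (f := fun p : En n × ℝ => p.2 • p.1) (by fun_prop)
        have g3 : volume (S \ E) ≤ ENNReal.ofReal (n * 2 * 2 ^ n * V * (κ - 1)) := by
          have hES : E = (κ ^ 2)⁻¹ • S := by
            rw [hE, hS, smul_smul]
            congr 1
            field_simp
          have hsub : (κ ^ 2)⁻¹ • S ⊆ S := by
            rw [← hES]; exact hEΩ.trans (subset_closure.trans hclS)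
          have hk2 : 1 ≤ κ ^ 2 := by nlinarith
          have := vol_shell hSo (hb.smul₀ κ) (κ ^ 2)⁻¹
            ⟨by positivity, inv_le_one_of_one_le₀ hk2⟩ hsub
          rw [← hES, hS, vol_smul κ hκ0.le, hVe] at this
          refine this.trans ?_
          have i1 : 1 - (κ ^ 2)⁻¹ ≤ 2 * (κ - 1) := by
            have : 1 - (κ ^ 2)⁻¹ = (κ ^ 2 - 1) / κ ^ 2 := by field_simp
            rw [this, div_le_iff₀ (by positivity)]
            nlinarith [mul_nonneg hκ1.le hκ1.le, mul_nonneg hκ1.le hκ0.le,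
              mul_nonneg (mul_nonneg hκ1.le hκ1.le) hκ0.le]
          have i0 : 0 ≤ 1 - (κ ^ 2)⁻¹ := by linarith [inv_le_one_of_one_le₀ hk2]
          rw [← ENNReal.ofReal_mul (by positivity), ← ENNReal.ofReal_mul (by positivity)]
          refine ENNReal.ofReal_le_ofReal ?_
          calc n * (1 - (κ ^ 2)⁻¹) * (κ ^ n * V) ≤ n * (2 * (κ - 1)) * (2 ^ n * V) := by
                have := hκ.2
                gcongr
            _ = _ := by ring
        gcongr
    _ ≤ _ := by
        rw [← ofReal_norm, ← ENNReal.ofReal_mul (by positivity),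
          ← ENNReal.ofReal_mul (by positivity), ← ENNReal.ofReal_mul (by positivity),
          ← ENNReal.ofReal_add (by positivity) (by positivity),
          ← ENNReal.ofReal_add (by positivity) (by positivity),
          ← ENNReal.ofReal_mul (by positivity)]
        refine ENNReal.ofReal_le_ofReal ?_
        have : 0 ≤ ‖z‖ * ((κ - 1) * (|R| * H)) := by positivity
        nlinarith [this]


lemma supp_bound {n : ℕ} {Ω : Set (En n)} (ho : IsOpen Ω) (hb : IsBounded Ω) (w : En n → ℝ)
    (hw0 : ∀ x ∉ Ω, w x = 0) (z : En n) (c : ℝ) (hc : ∀ x, |w x - w (x + z)| ≤ c) :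
    ∫⁻ x, ‖w x - w (x + z)‖ₑ ^ 2 ≤ ENNReal.ofReal (2 * c ^ 2 * (volume Ω).toReal) := by
  have hfin : volume Ω ≠ ∞ := hb.measure_lt_top.ne
  have hc0 : 0 ≤ c := (abs_nonneg _).trans (hc 0)
  set F : En n → ℝ≥0∞ := Ω.indicator (fun _ => ENNReal.ofReal (c ^ 2)) with hF
  have hFm : Measurable F := measurable_const.indicator ho.measurableSet
  have hFi : ∫⁻ x, F x = ENNReal.ofReal (c ^ 2) * volume Ω :=
    lintegral_indicator_const ho.measurableSet _
  have hpt : ∀ x, ‖w x - w (x + z)‖ₑ ^ 2 ≤ F x + F (x + z) := by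
    intro x
    have h1 : ‖w x - w (x + z)‖ₑ ^ 2 ≤ ENNReal.ofReal (c ^ 2) := by
      rw [← ofReal_norm, ← ENNReal.ofReal_pow (norm_nonneg _)]
      refine ENNReal.ofReal_le_ofReal ?_
      have := hc x
      rw [Real.norm_eq_abs]
      gcongr
    by_cases hx : x ∈ Ω
    · refine le_add_right ?_
      rw [hF, indicator_of_mem hx]; exact h1
    · by_cases hxz : x + z ∈ Ω
      · refine le_add_left ?_
        rw [hF, indicator_of_mem hxz]; exact h1
      · rw [hw0 _ hx, hw0 _ hxz]; simp
  calc ∫⁻ x, ‖w x - w (x + z)‖ₑ ^ 2 ≤ ∫⁻ x, (F x + F (x + z)) := lintegral_mono hpt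
    _ = (∫⁻ x, F x) + ∫⁻ x, F x := by
        rw [lintegral_add_left hFm, lintegral_add_right_eq_self F z]
    _ = _ := by
        rw [hFi, ← ENNReal.ofReal_toReal hfin, ← ENNReal.ofReal_mul (by positivity),
          ← ENNReal.ofReal_add (by positivity) (by positivity),
          ENNReal.toReal_ofReal (by positivity)]
        congr 1; ring

lemma sq_integrable_of {n : ℕ} (g : En n → ℝ) (hg : StronglyMeasurable g)
    (h : ∫⁻ x, ‖g x‖ₑ ^ 2 < ∞) : Integrable (fun x => g x ^ 2) := by
  refine ⟨(hg.pow 2).aestronglyMeasurable, ?_⟩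
  rw [hasFiniteIntegral_iff_enorm]
  simpa only [enorm_pow] using h

lemma integral_sq_le {n : ℕ} (g : En n → ℝ) (hg : StronglyMeasurable g) (B : ℝ) (hB : 0 ≤ B)
    (h : ∫⁻ x, ‖g x‖ₑ ^ 2 ≤ ENNReal.ofReal B) : ∫ x, g x ^ 2 ≤ B := by
  have hi := sq_integrable_of g hg (h.trans_lt ENNReal.ofReal_lt_top)
  rw [← ENNReal.ofReal_le_ofReal_iff hB, ofReal_integral_eq_lintegral_ofReal hi
    (Eventually.of_forall fun x => sq_nonneg _)]
  refine le_trans (le_of_eq (lintegral_congr fun x => ?_)) h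
  rw [← ofReal_norm, ← ENNReal.ofReal_pow (norm_nonneg _), Real.norm_eq_abs, sq_abs]

/-- The defect of `Φ` is half a squared norm. -/
lemma phi_defect {n : ℕ} (g : En n → ℝ) (hg : StronglyMeasurable g)
    (hi : Integrable (fun x => g x ^ 2)) (lam : ℝ) (hl : 1 < lam) :
    (∫ x : En n, g (lam • x) * g (lam⁻¹ • x)) - ∫ x : En n, g ((1:ℝ) • x) * g ((1:ℝ)⁻¹ • x)
      = - (1 / 2) * ∫ x : En n, (lam ^ n * g (lam ^ 2 • x) - g x) ^ 2 := by
  have hl0 : 0 < lam := by linarith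
  have hk0 : lam ^ 2 ≠ 0 := by positivity
  have i1 : Integrable (fun x : En n => g (lam ^ 2 • x) ^ 2) := hi.comp_smul hk0
  have hgm : StronglyMeasurable (fun x : En n => g (lam ^ 2 • x)) :=
    hg.comp_measurable (measurable_const_smul _)
  have i2 : Integrable (fun x : En n => g (lam ^ 2 • x) * g x) := by
    refine (i1.add hi).mono' (hgm.mul hg).aestronglyMeasurable
      (Eventually.of_forall fun x => ?_)
    simp only [Pi.add_apply]
    rw [Real.norm_eq_abs, abs_le]
    constructor <;> nlinarith [sq_nonneg (g (lam ^ 2 • x) + g x),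
      sq_nonneg (g (lam ^ 2 • x) - g x), sq_nonneg (g (lam ^ 2 • x)), sq_nonneg (g x)]
  have e1 : ∫ x : En n, g (lam • x) * g (lam⁻¹ • x)
      = lam ^ n * ∫ x : En n, g (lam ^ 2 • x) * g x := by
    have := Measure.integral_comp_smul (volume : Measure (En n))
      (fun x => g (lam ^ 2 • x) * g x) lam⁻¹
    rw [finrank_euclideanSpace_fin, abs_of_nonneg (by positivity), smul_eq_mul, inv_pow,
      inv_inv] at this
    rw [← this]
    refine integral_congr_ae (Eventually.of_forall fun x => ?_)
    simp only [smul_smul]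
    congr 3
    field_simp
  have e2 : ∫ x : En n, g (lam ^ 2 • x) ^ 2 = ((lam ^ n) ^ 2)⁻¹ * ∫ x : En n, g x ^ 2 := by
    have := Measure.integral_comp_smul (volume : Measure (En n)) (fun x => g x ^ 2) (lam ^ 2)
    rw [finrank_euclideanSpace_fin, abs_of_nonneg (by positivity), smul_eq_mul] at this
    rw [this, ← pow_mul, ← pow_mul, mul_comm 2 n]
  have e3 : ∫ x : En n, (lam ^ n * g (lam ^ 2 • x) - g x) ^ 2
      = (lam ^ n) ^ 2 * (∫ x : En n, g (lam ^ 2 • x) ^ 2)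
        - 2 * lam ^ n * (∫ x : En n, g (lam ^ 2 • x) * g x) + ∫ x : En n, g x ^ 2 := by
    have i3 : Integrable (fun x : En n => (lam ^ n) ^ 2 * g (lam ^ 2 • x) ^ 2
        - 2 * lam ^ n * (g (lam ^ 2 • x) * g x)) := (i1.const_mul _).sub (i2.const_mul _)
    rw [← integral_const_mul, ← integral_const_mul, ← integral_sub (i1.const_mul _)
      (i2.const_mul _), ← integral_add i3 hi]
    refine integral_congr_ae (Eventually.of_forall fun x => ?_)
    simp only
    ring
  have e4 : ∫ x : En n, g ((1:ℝ) • x) * g ((1:ℝ)⁻¹ • x) = ∫ x : En n, g x ^ 2 := by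
    refine integral_congr_ae (Eventually.of_forall fun x => ?_)
    simp only [one_smul, inv_one]; ring
  rw [e1, e3, e4, e2]
  have : lam ^ n ≠ 0 := by positivity
  field_simp
  ring

/-- Step (C) in the proof of Theorem 2.4: for
`Φ(λ) = ∫_{ℝⁿ} 𝔤(λx) 𝔤(x/λ) dx` with `𝔤 = (-Δ)^{s/2}u`, the one-sided derivative of
`Φ` at `λ = 1` vanishes. -/
theorem pohozaev_step_C (n : ℕ) (hn : 1 ≤ n) (s : ℝ) (hs : s ∈ Set.Ioo (0:ℝ) 1)
    (D : C2Domain n) (hD : D.StrictlyStarShapedAt 0)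
    (u : En n → ℝ)
    (hu2 : ContDiffOn ℝ 2 u D.carrier)
    (hu1 : ContDiffOn ℝ 1 u (closure D.carrier))
    (hlip : ∃ L : ℝ≥0, LipschitzWith L u)
    (hzero : ∀ x ∉ D.carrier, u x = 0)
    (hstar : StarCond n s D.carrier u) :
    Filter.Tendsto
      (fun lam : ℝ =>
        ((∫ x : En n, fracHalf n s u (lam • x) * fracHalf n s u (lam⁻¹ • x))
          - ∫ x : En n, fracHalf n s u ((1:ℝ) • x) * fracHalf n s u ((1:ℝ)⁻¹ • x))
          / (lam - 1))
      (nhdsWithin 1 (Set.Ioi 1)) (nhds 0) := by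
  obtain ⟨L, hL⟩ := hlip
  obtain ⟨ρ, hρ, hball⟩ := star_ball D hD
  have ho := dom_open D
  have hb := D.bounded
  have hne := frontier_ne hn D
  have hH := hess_integrable hρ ho hb hne hball hstar
  set Ω := D.carrier with hΩ
  set V := (volume Ω).toReal with hV
  have hV0 : 0 ≤ V := ENNReal.toReal_nonneg
  obtain ⟨R, hR⟩ := hb.exists_norm_le
  have hR0 : 0 ≤ R := (norm_nonneg _).trans (hR 0 hD.1)
  obtain ⟨M, hM0, hM⟩ : ∃ M : ℝ, 0 ≤ M ∧ ∀ x, |u x| ≤ M := by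
    obtain ⟨p, hp⟩ := hne
    rw [ho.frontier_eq] at hp
    refine ⟨L * (R + ‖p‖), by positivity, fun x => ?_⟩
    by_cases hx : x ∈ Ω
    · have h1 := hL.norm_sub_le x p
      rw [hzero p hp.2, sub_zero, Real.norm_eq_abs] at h1
      refine h1.trans ?_
      gcongr
      exact (norm_sub_le _ _).trans (by linarith [hR x hx])
    · rw [hzero x hx, abs_zero]; positivity
  set g := fracHalf n s u with hg
  have hgm : StronglyMeasurable g := fracHalf_meas n s u hL.continuous
  set θ : ℝ := (1 + s) / 2 with hθd
  have hθ : θ ∈ Ioo s 1 := ⟨by rw [hθd]; linarith [hs.2], by rw [hθd]; linarith [hs.2]⟩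
  obtain ⟨K, hK0, hK⟩ := mink n hn s hs θ hθ
  -- `g` is square integrable
  have hgi : Integrable (fun x => g x ^ 2) := by
    refine sq_integrable_of g hgm ?_
    refine (hK u (2 * (L ^ 2 + (2 * M) ^ 2) * V) 1 hL.continuous (by positivity) one_pos le_rfl
      ?_ ?_).trans_lt ENNReal.ofReal_lt_top
    · intro z
      refine (supp_bound ho hb u hzero z (L * ‖z‖) fun x => ?_).trans
        (ENNReal.ofReal_le_ofReal ?_)
      · have := hL.dist_le_mul x (x + z)
        rwa [Real.dist_eq, dist_self_add_right] at this
      · have : 0 ≤ (2 * M) ^ 2 * V * ‖z‖ ^ 2 := by positivity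
        rw [← hV]
        nlinarith
    · intro z
      refine (supp_bound ho hb u hzero z (2 * M) fun x => ?_).trans
        (ENNReal.ofReal_le_ofReal ?_)
      · have := abs_sub (u x) (u (x + z))
        linarith [hM x, hM (x + z)]
      · have : 0 ≤ (L : ℝ) ^ 2 * V := by positivity
        rw [← hV]
        nlinarith
  -- the exponent
  set p : ℝ := (n : ℝ) / 2 - s with hp
  obtain ⟨A, hA0, hA⟩ : ∃ A : ℝ, 0 ≤ A ∧ ∀ᶠ κ in nhds (1:ℝ), |κ ^ p - 1| ≤ A * |κ - 1| := by
    have h1 : HasDerivAt (fun κ : ℝ => κ ^ p) (p * 1 ^ (p - 1)) 1 :=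
      Real.hasDerivAt_rpow_const (Or.inl one_ne_zero)
    obtain ⟨A, hA0, hA⟩ := h1.isBigO_sub.exists_nonneg
    refine ⟨A, hA0, ?_⟩
    filter_upwards [hA.bound] with κ hκ
    simpa using hκ
  obtain ⟨C₁, hC₁0, hC₁⟩ := tv_bound hρ ho hb hball hu2 L hL hzero hH A hA0
  set Lw : ℝ := (2 * (1 + A) + 1) * L with hLw
  set c₂ : ℝ := A * M + L * R with hc₂
  set C : ℝ := Lw * C₁ + 2 * (2 * c₂) ^ 2 * V with hC
  have hLw0 : 0 ≤ Lw := by positivity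
  have hc₂0 : 0 ≤ c₂ := by positivity
  have hC0 : 0 ≤ C := by positivity
  -- the main estimate
  have main : ∀ κ ∈ Ioc (1:ℝ) 2, |κ ^ p - 1| ≤ A * (κ - 1) →
      ∫⁻ x, ‖fracHalf n s (fun y => κ ^ p * u (κ • y) - u y) x‖ₑ ^ 2
        ≤ ENNReal.ofReal (K * C * (κ - 1) ^ (2 - θ)) := by
    intro κ hκ hα
    have hκ0 : 0 < κ := by linarith [hκ.1]
    have hκ1 : 0 < κ - 1 := by linarith [hκ.1]
    have hTV := hC₁ κ (κ ^ p) hκ hα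
    set α := κ ^ p with hαd
    have hα1 : |α| ≤ 1 + A := by
      have h1 : |α| ≤ |α - 1| + 1 := by
        have := abs_add_le (α - 1) 1
        simpa using this
      nlinarith [hκ.2]
    set w : En n → ℝ := fun y => α * u (κ • y) - u y with hw
    have hLwi : ∀ x y, |w x - w y| ≤ Lw * ‖x - y‖ := by
      intro y x
      have e : w y - w x = α * (u (κ • y) - u (κ • x)) - (u y - u x) := by simp only [hw]; ring
      have l1 := hL.norm_sub_le (κ • y) (κ • x)
      have l2 := hL.norm_sub_le y x
      rw [← smul_sub, norm_smul, Real.norm_of_nonneg hκ0.le] at l1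
      rw [e, ← Real.norm_eq_abs]
      refine (norm_sub_le _ _).trans ?_
      rw [norm_mul, Real.norm_eq_abs α]
      have l3 : |α| * ‖u (κ • y) - u (κ • x)‖ ≤ (1 + A) * (L * (2 * ‖y - x‖)) := by
        refine mul_le_mul hα1 (l1.trans ?_) (norm_nonneg _) (by positivity)
        have := hκ.2
        gcongr
      rw [hLw]
      linarith
    have hwlip : LipschitzWith Lw.toNNReal w := by
      refine LipschitzWith.of_dist_le_mul fun x y => ?_
      rw [Real.coe_toNNReal _ hLw0, Real.dist_eq, dist_eq_norm]
      exact hLwi x y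
    have hw0 : ∀ x ∉ Ω, w x = 0 := by
      intro x hx
      have hx2 : κ • x ∉ Ω := by
        intro hh
        have := shrink_closure hρ hball _ (subset_closure hh) κ⁻¹
          ⟨by positivity, inv_lt_one_of_one_lt₀ hκ.1⟩
        rw [smul_smul, inv_mul_cancel₀ hκ0.ne', one_smul] at this
        exact hx this
      simp only [hw, hzero _ hx, hzero _ hx2]; ring
    have hwb : ∀ x, |w x| ≤ c₂ * (κ - 1) := by
      intro x
      by_cases hx : x ∈ Ω
      · have e : w x = (α - 1) * u (κ • x) + (u (κ • x) - u x) := by simp only [hw]; ring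
        have l1 := hL.norm_sub_le (κ • x) x
        have e2 : κ • x - x = (κ - 1) • x := by module
        rw [e2, norm_smul, Real.norm_of_nonneg hκ1.le, Real.norm_eq_abs] at l1
        have l2 : (L : ℝ) * ((κ - 1) * ‖x‖) ≤ L * ((κ - 1) * R) := by
          have := hR x hx
          gcongr
        have l3 : |α - 1| * |u (κ • x)| ≤ A * (κ - 1) * M :=
          mul_le_mul hα (hM _) (abs_nonneg _) (by positivity)
        rw [e]
        refine (abs_add_le _ _).trans ?_
        rw [abs_mul, hc₂]
        linarith
      · rw [hw0 x hx, abs_zero]; positivity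
    refine hK w C (κ - 1) hwlip.continuous hC0 hκ1 (by linarith [hκ.2]) ?_ ?_
    · intro z
      have h1 := (l1_diff w _ hwlip z).trans (hTV z)
      calc ∫⁻ x, ‖w x - w (x + z)‖ₑ ^ 2
          ≤ ∫⁻ x, ENNReal.ofReal (Lw * ‖z‖) * ‖w x - w (x + z)‖ₑ := by
            refine lintegral_mono fun x => ?_
            simp only
            rw [sq]
            refine mul_le_mul_left ?_ _
            rw [← ofReal_norm, Real.norm_eq_abs]
            refine ENNReal.ofReal_le_ofReal ((hLwi _ _).trans (le_of_eq ?_))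
            rw [sub_add_cancel_left, norm_neg]
        _ = ENNReal.ofReal (Lw * ‖z‖) * ∫⁻ x, ‖w x - w (x + z)‖ₑ :=
            lintegral_const_mul' _ _ ENNReal.ofReal_ne_top
        _ ≤ ENNReal.ofReal (Lw * ‖z‖) * ENNReal.ofReal (C₁ * (κ - 1) * ‖z‖) := by gcongr
        _ ≤ _ := by
            rw [← ENNReal.ofReal_mul (by positivity)]
            refine ENNReal.ofReal_le_ofReal ?_
            have : 0 ≤ 2 * (2 * c₂) ^ 2 * V * ((κ - 1) * ‖z‖ ^ 2) := by positivity
            rw [hC]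
            linarith
    · intro z
      refine (supp_bound ho hb w hw0 z (2 * c₂ * (κ - 1)) fun x => ?_).trans
        (ENNReal.ofReal_le_ofReal ?_)
      · have := abs_sub (w x) (w (x + z))
        linarith [hwb x, hwb (x + z)]
      · have : 0 ≤ Lw * C₁ * (κ - 1) ^ 2 := by positivity
        rw [← hV, hC]
        linarith
  -- conclusion
  have hbound : ∀ᶠ lam in nhdsWithin (1:ℝ) (Ioi 1),
      ‖((∫ x : En n, g (lam • x) * g (lam⁻¹ • x))
          - ∫ x : En n, g ((1:ℝ) • x) * g ((1:ℝ)⁻¹ • x)) / (lam - 1)‖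
        ≤ K * C * 3 ^ (2 - θ) * (lam - 1) ^ (1 - θ) := by
    have ht : Tendsto (fun lam : ℝ => lam ^ 2) (nhdsWithin (1:ℝ) (Ioi 1)) (nhds 1) := by
      have : Tendsto (fun lam : ℝ => lam ^ 2) (nhds (1:ℝ)) (nhds (1 ^ 2)) :=
        (continuous_pow 2).tendsto 1
      rw [one_pow] at this
      exact this.mono_left nhdsWithin_le_nhds
    filter_upwards [ht.eventually hA, ht.eventually (ge_mem_nhds (show (1:ℝ) < 2 by norm_num)),
      self_mem_nhdsWithin] with lam h1 h2 h3
    have hl : 1 < lam := h3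
    have hl0 : 0 < lam := by linarith
    have hl1 : 0 < lam - 1 := by linarith
    have hk : 1 < lam ^ 2 := by nlinarith
    have hk0 : 0 < lam ^ 2 := by positivity
    rw [abs_of_pos (show 0 < lam ^ 2 - 1 by linarith)] at h1
    have hm := main (lam ^ 2) ⟨hk, h2⟩ h1
    have hfe : ∀ x, fracHalf n s (fun y => (lam ^ 2) ^ p * u (lam ^ 2 • y) - u y) x
        = lam ^ n * g (lam ^ 2 • x) - g x := by
      intro x
      rw [fracHalf_comb n hn s hs u M hM L hL _ _ hk0, ← Real.rpow_add hk0]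
      congr 2
      rw [hp, sub_add_cancel, ← Real.rpow_natCast, ← Real.rpow_natCast, ← Real.rpow_mul hl0.le]
      congr 1; push_cast; ring
    simp only [hfe] at hm
    have hhm : StronglyMeasurable (fun x => lam ^ n * g (lam ^ 2 • x) - g x) :=
      ((hgm.comp_measurable (measurable_const_smul _)).const_mul _).sub hgm
    have hk1 : 0 ≤ lam ^ 2 - 1 := by linarith
    have hI := integral_sq_le _ hhm _ (by positivity) hm
    rw [phi_defect g hgm hgi lam hl, norm_div, Real.norm_of_nonneg hl1.le, norm_mul,
      div_le_iff₀ hl1]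
    have hI0 : 0 ≤ ∫ x : En n, (lam ^ n * g (lam ^ 2 • x) - g x) ^ 2 :=
      integral_nonneg fun x => sq_nonneg _
    rw [Real.norm_of_nonneg hI0]
    have hle : lam ^ 2 - 1 ≤ 3 * (lam - 1) := by nlinarith
    have hp1 : (lam ^ 2 - 1) ^ (2 - θ) ≤ 3 ^ (2 - θ) * ((lam - 1) ^ (1 - θ) * (lam - 1)) := by
      rw [← Real.rpow_add_one hl1.ne']
      have e : 1 - θ + 1 = 2 - θ := by ring
      rw [e, ← Real.mul_rpow (by norm_num) hl1.le]
      exact Real.rpow_le_rpow hk1 hle (by linarith [hθ.2])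
    have hp2 : K * C * (lam ^ 2 - 1) ^ (2 - θ)
        ≤ K * C * (3 ^ (2 - θ) * ((lam - 1) ^ (1 - θ) * (lam - 1))) := by gcongr
    have hn2 : ‖(-(1 / 2) : ℝ)‖ = 1 / 2 := by norm_num
    rw [hn2]
    linarith
  refine squeeze_zero_norm' hbound ?_
  have h1 : Tendsto (fun lam : ℝ => K * C * 3 ^ (2 - θ) * (lam - 1) ^ (1 - θ)) (nhds (1:ℝ))
      (nhds (K * C * 3 ^ (2 - θ) * (1 - 1) ^ (1 - θ))) := by
    refine Tendsto.const_mul _ ?_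
    refine Tendsto.rpow_const (tendsto_id.sub tendsto_const_nhds) (Or.inr ?_)
    linarith [hθ.2]
  rw [sub_self, Real.zero_rpow (by linarith [hθ.2]), mul_zero] at h1
  exact h1.mono_left nhdsWithin_le_nhds
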